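/- Let G be a connected finite simple graph such that: every vertex of G has degree 2 or 3; every connected component of the subgraph of G induced on the vertices of degree 2 is a path containing at least 4 vertices; for each such component path, its two ends have degree-3 neighbors u and v in G which are distinct and non-adjacent in G; and distinct such component paths attach to distinct pairs of degree-3 vertices. (Equivalently, G is obtained from a simple cubic graph by replacing some of its edges with internally disjoint paths of length at least 5.) Then lir(^2G) ≤ 2. -/

import Mathlib

open scoped Classical

/-- The red degree of a vertex `x`: the sum of the red multiplicities `r e`
over all edges `e` of `G` incident with `x`. -/
noncomputable def redDeg {V : Type*} [Fintype V] [DecidableEq V]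
    (G : SimpleGraph V) (r : Sym2 V → ℕ) (x : V) : ℕ :=
  ∑ e ∈ G.edgeFinset.filter (fun e => x ∈ e), r e

/-- The blue degree of a vertex `x`: the sum of `2 - r e` over all edges `e`
of `G` incident with `x`. -/
noncomputable def blueDeg {V : Type*} [Fintype V] [DecidableEq V]
    (G : SimpleGraph V) (r : Sym2 V → ℕ) (x : V) : ℕ :=
  ∑ e ∈ G.edgeFinset.filter (fun e => x ∈ e), (2 - r e)

/-- `r : E(G) → {0,1,2}` encodes a locally irregular 2-edge-coloring of `²G`:
every edge gets a red multiplicity at most 2, and for every edge `uv`, if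
`r s(u,v) ≥ 1` the red degrees of `u` and `v` differ, and if `r s(u,v) ≤ 1`
the blue degrees of `u` and `v` differ. -/
def IsLIR2 {V : Type*} [Fintype V] [DecidableEq V]
    (G : SimpleGraph V) (r : Sym2 V → ℕ) : Prop :=
  (∀ e ∈ G.edgeSet, r e ≤ 2) ∧
  ∀ u v : V, G.Adj u v →
    (1 ≤ r s(u, v) → redDeg G r u ≠ redDeg G r v) ∧
    (r s(u, v) ≤ 1 → blueDeg G r u ≠ blueDeg G r v)

/-- `lir(²G) ≤ 2`: there is a locally irregular 2-edge-coloring of `²G`. -/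
def LIRtwoLE2 {V : Type*} [Fintype V] [DecidableEq V] (G : SimpleGraph V) : Prop :=
  ∃ r : Sym2 V → ℕ, IsLIR2 G r


section aux
variable {V : Type*} [Fintype V] [DecidableEq V] (G : SimpleGraph V)

lemma sum_inc {M : Type*} [AddCommMonoid M] (f : Sym2 V → M) (x : V) :
    ∑ e ∈ G.edgeFinset.filter (fun e => x ∈ e), f e = ∑ w ∈ G.neighborFinset x, f s(x, w) := by
  symm
  apply Finset.sum_bij (fun w _ => s(x, w))
  · intro w hw
    simpa using hw
  · intro a _ b _ h
    simp at h
    rcases h with h | ⟨h, h'⟩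
    · exact h
    · rw [h', h]
  · intro e he
    simp only [Finset.mem_filter, SimpleGraph.mem_edgeFinset] at he
    obtain ⟨w, rfl⟩ := he.2
    exact ⟨w, by simpa using he.1, rfl⟩
  · intros; rfl

lemma red_add_blue (r : Sym2 V → ℕ) (hr : ∀ e, r e ≤ 2) (x : V) :
    redDeg G r x + blueDeg G r x = 2 * G.degree x := by
  unfold redDeg blueDeg
  rw [← Finset.sum_add_distrib]
  have : ∀ e ∈ G.edgeFinset.filter (fun e => x ∈ e), r e + (2 - r e) = 2 := fun e _ => by
    have := hr e; omega
  rw [Finset.sum_congr rfl this, sum_inc G (fun _ => 2) x]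
  simp [mul_comm]

lemma weights (c : V → ZMod 3)
    (h : ∀ φ : V → ZMod 3, (∀ u v, G.Adj u v → φ u + φ v = 0) → ∑ v, φ v * c v = 0) :
    ∃ r : Sym2 V → ZMod 3, ∀ x, ∑ w ∈ G.neighborFinset x, r s(x, w) = c x := by
  let L : (Sym2 V → ZMod 3) →ₗ[ZMod 3] (V → ZMod 3) :=
    { toFun := fun r x => ∑ w ∈ G.neighborFinset x, r s(x, w)
      map_add' := by intro a b; ext x; simp [Finset.sum_add_distrib]
      map_smul' := by intro a b; ext x; simp [Finset.mul_sum] }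
  by_contra hc
  have hc' : c ∉ LinearMap.range L := by
    rintro ⟨r, hr⟩
    exact hc ⟨r, fun x => congrFun hr x⟩
  have : Fact (Nat.Prime 3) := ⟨by norm_num⟩
  obtain ⟨f, hf, hf2⟩ := Submodule.exists_le_ker_of_notMem hc'
  apply hf
  have hfc : f c = ∑ v, f (Pi.single v 1) * c v := by
    conv_lhs => rw [pi_eq_sum_univ' c]
    rw [map_sum]
    refine Finset.sum_congr rfl fun v _ => ?_
    rw [map_smul, smul_eq_mul, mul_comm]
  rw [hfc]
  apply h (fun v => f (Pi.single v 1))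
  intro u v huv
  have h1 : L (Pi.single s(u, v) 1) = Pi.single u 1 + Pi.single v 1 := by
    ext x
    change ∑ w ∈ G.neighborFinset x, (Pi.single s(u, v) (1 : ZMod 3) : Sym2 V → ZMod 3) s(x, w) = _
    simp only [Pi.single_apply, Pi.add_apply]
    have hne := huv.ne
    by_cases hxu : x = u
    · subst hxu
      rw [Finset.sum_eq_single v]
      · simp [hne]
      · intro b _ hb
        rw [if_neg]; simp; tauto
      · intro h; simp [huv] at h
    · by_cases hxv : x = v
      · subst hxv
        rw [Finset.sum_eq_single u]
        · simp [Sym2.eq_swap, hxu]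
        · intro b _ hb
          rw [if_neg]; simp; tauto
        · intro h; simp [huv.symm] at h
      · simp [hxu, hxv]
  have h2 := hf2 ⟨_, h1⟩
  simpa using h2

def Valid (D : Set V) (c : V → ZMod 3) : Prop :=
  ∀ u v, G.Adj u v → c u ≠ c v ∧ (u ∉ D → v ∈ D → c u = c v + 1)

lemma finish (D : Set V) (hdeg : ∀ v : V, G.degree v = 2 ∨ G.degree v = 3)
    (hD : D = {v : V | G.degree v = 2}) (c : V → ZMod 3) (hv : Valid G D c)
    (h : ∀ φ : V → ZMod 3, (∀ u v, G.Adj u v → φ u + φ v = 0) → ∑ v, φ v * c v = 0) :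
    LIRtwoLE2 G := by
  obtain ⟨r, hr⟩ := weights G c h
  have hle : ∀ e, (r e).val ≤ 2 := fun e => by have := ZMod.val_lt (r e); omega
  have hrc : ∀ x, ((redDeg G (fun e => (r e).val) x : ℕ) : ZMod 3) = c x := by
    intro x
    unfold redDeg
    rw [sum_inc, Nat.cast_sum, ← hr x]
    simp
  have hs := red_add_blue G (fun e => (r e).val) hle
  refine ⟨fun e => (r e).val, fun e _ => hle e, ?_⟩
  have key : ∀ u v, G.Adj u v → redDeg G (fun e => (r e).val) u ≠ redDeg G (fun e => (r e).val) v ∧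
      blueDeg G (fun e => (r e).val) u ≠ blueDeg G (fun e => (r e).val) v := by
    intro u v huv
    have h1 := (hv u v huv).1
    have h2 := (hv u v huv).2
    have h3 := (hv v u huv.symm).2
    rw [← hrc u, ← hrc v] at h1 h2 
    rw [← hrc u, ← hrc v] at h3
    have hne : redDeg G (fun e => (r e).val) u ≠ redDeg G (fun e => (r e).val) v := by
      intro h; exact h1 (by rw [h])
    have hu := hs u
    have hv' := hs v
    simp only [hD, Set.mem_ofPred_eq] at h2 h3
    refine ⟨hne, ?_⟩
    have cc : ∀ a b : ℕ, (a : ZMod 3) = (b : ZMod 3) + 1 → a % 3 = (b + 1) % 3 := by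
      intro a b h
      have : (a : ZMod 3) = ((b + 1 : ℕ) : ZMod 3) := by push_cast; exact h
      exact (ZMod.natCast_eq_natCast_iff' _ _ _).1 this
    rcases hdeg u with du | du <;> rcases hdeg v with dv | dv
    · omega
    · have := cc _ _ (h3 (by omega) du); omega
    · have := cc _ _ (h2 (by omega) dv); omega
    · omega
  exact fun u v huv => ⟨fun _ => (key u v huv).1, fun _ => (key u v huv).2⟩

lemma greedy (S : Finset V) (f : V → ZMod 3)
    (hf : ∀ u ∈ S, ∀ v ∈ S, G.Adj u v → f u ≠ f v) :
    ∀ (n : ℕ) (U : Finset V), U.card = n → Disjoint S U →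
    (∀ U' ⊆ U, U'.Nonempty → ∃ v ∈ U', (G.neighborFinset v ∩ (S ∪ U')).card ≤ 2) →
    ∃ f' : V → ZMod 3, (∀ v, v ∉ U → f' v = f v) ∧
      ∀ u ∈ S ∪ U, ∀ v ∈ S ∪ U, G.Adj u v → f' u ≠ f' v := by
  intro n
  induction n with
  | zero =>
    intro U hU _ _
    rw [Finset.card_eq_zero] at hU
    subst hU
    exact ⟨f, fun _ _ => rfl, by simpa using hf⟩
  | succ n ih =>
    intro U hU hd hH
    have hne : U.Nonempty := by rw [← Finset.card_pos]; omega
    obtain ⟨v, hvU, hv⟩ := hH U subset_rfl hne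
    obtain ⟨f', h1, h2⟩ := ih (U.erase v) (by rw [Finset.card_erase_of_mem hvU]; omega)
      (hd.mono_right (Finset.erase_subset _ _))
      (fun U' hU' => hH U' (hU'.trans (Finset.erase_subset _ _)))
    have : ∃ k : ZMod 3, k ∉ (G.neighborFinset v ∩ (S ∪ U)).image f' := by
      by_contra! hk
      have : (Finset.univ : Finset (ZMod 3)) ⊆ (G.neighborFinset v ∩ (S ∪ U)).image f' :=
        fun k _ => hk k
      have h3 := (Finset.card_le_card this).trans Finset.card_image_le
      have : (Finset.univ : Finset (ZMod 3)).card = 3 := by decide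
      omega
    obtain ⟨k, hk⟩ := this
    simp only [Finset.mem_image, not_exists, not_and] at hk
    have hvS : v ∉ S := fun h => Finset.disjoint_left.1 hd h hvU
    refine ⟨Function.update f' v k, ?_, ?_⟩
    · intro w hw
      have : w ≠ v := by rintro rfl; exact hw hvU
      rw [Function.update_of_ne this]
      exact h1 w (by simp [hw])
    · intro a ha b hb hab
      by_cases hav : a = v
      · subst hav
        rw [Function.update_self, Function.update_of_ne hab.ne']
        exact fun h => hk b (by simp only [Finset.mem_inter, SimpleGraph.mem_neighborFinset]; exact ⟨hab, hb⟩) h.symm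
      · by_cases hbv : b = v
        · subst hbv
          rw [Function.update_self, Function.update_of_ne hab.ne]
          exact hk a (by simp only [Finset.mem_inter, SimpleGraph.mem_neighborFinset]; exact ⟨hab.symm, ha⟩)
        · rw [Function.update_of_ne hav, Function.update_of_ne hbv]
          apply h2 a _ b _ hab
          · simp only [Finset.mem_union, Finset.mem_erase] at ha ⊢; tauto
          · simp only [Finset.mem_union, Finset.mem_erase] at hb ⊢; tauto

/-- a vertex of degree at most three with a neighbour outside `W`. -/
lemma card_inter_le (hd : ∀ v, G.degree v ≤ 3) (W : Finset V) (v w : V) (h : G.Adj v w) (hw : w ∉ W) :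
    (G.neighborFinset v ∩ W).card ≤ 2 := by
  have h1 : G.neighborFinset v ∩ W ⊆ (G.neighborFinset v).erase w := by
    intro x hx
    simp only [Finset.mem_inter] at hx
    refine Finset.mem_erase.2 ⟨?_, hx.1⟩
    rintro rfl; exact hw hx.2
  have h2 := Finset.card_le_card h1
  rw [Finset.card_erase_of_mem (by simpa using h), SimpleGraph.card_neighborFinset_eq_degree] at h2
  have := hd v
  omega

lemma exists_out (hconn : G.Connected) (W : Finset V) (hW : W.Nonempty) (z : V) (hz : z ∉ W) :
    ∃ v ∈ W, ∃ w, w ∉ W ∧ G.Adj v w := by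
  by_contra! hc
  obtain ⟨a, ha⟩ := hW
  obtain ⟨p⟩ := hconn.preconnected a z
  have : ∀ (a b : V) (p : G.Walk a b), a ∈ W → b ∈ W := by
    intro a b p
    induction p with
    | nil => exact id
    | cons h p ih =>
      intro ha
      apply ih
      by_contra hh
      exact hc _ ha _ hh h
  exact hz (this a z p ha)

/-- colouring of a proper subset of a connected subcubic graph -/
lemma col_proper (hconn : G.Connected) (hd : ∀ v, G.degree v ≤ 3) (W : Finset V) (z : V) (hz : z ∉ W) :
    ∃ f : V → ZMod 3, ∀ u ∈ W, ∀ v ∈ W, G.Adj u v → f u ≠ f v := by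
  obtain ⟨f, _, hf⟩ := greedy G ∅ (fun _ => 0) (by simp) _ W rfl (by simp) (by
    intro U' hU' hne
    obtain ⟨v, hv, w, hw, hvw⟩ := exists_out G hconn U' hne z (fun h => hz (hU' h))
    exact ⟨v, hv, card_inter_le G hd _ v w hvw (by simpa using hw)⟩)
  exact ⟨f, by simpa using hf⟩

end aux

section brooks
variable {V : Type*} [Fintype V] [DecidableEq V] (G : SimpleGraph V)

lemma extend_last (hd : ∀ v, G.degree v ≤ 3) (x a b : V) (f : V → ZMod 3)
    (hf : ∀ u v, u ≠ x → v ≠ x → G.Adj u v → f u ≠ f v) (hab : a ≠ b) (ha : G.Adj x a)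
    (hb : G.Adj x b) (hfab : f a = f b) :
    ∃ f : V → ZMod 3, ∀ u v, G.Adj u v → f u ≠ f v := by
  have h1 : (G.neighborFinset x).image f ⊆ ((G.neighborFinset x).erase a).image f := by
    intro k hk
    simp only [Finset.mem_image, Finset.mem_erase] at hk ⊢
    obtain ⟨y, hy, rfl⟩ := hk
    by_cases hya : y = a
    · subst hya
      exact ⟨b, ⟨hab.symm, by simpa using hb⟩, hfab.symm⟩
    · exact ⟨y, ⟨hya, hy⟩, rfl⟩
  have h2 := (Finset.card_le_card h1).trans Finset.card_image_le
  rw [Finset.card_erase_of_mem (by simpa using ha), SimpleGraph.card_neighborFinset_eq_degree] at h2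
  have h3 := hd x
  have : ∃ k : ZMod 3, k ∉ (G.neighborFinset x).image f := by
    by_contra! hk
    have : (Finset.univ : Finset (ZMod 3)) ⊆ (G.neighborFinset x).image f := fun k _ => hk k
    have h3 := Finset.card_le_card this
    have : (Finset.univ : Finset (ZMod 3)).card = 3 := by decide
    omega
  obtain ⟨k, hk⟩ := this
  simp only [Finset.mem_image, not_exists, not_and, SimpleGraph.mem_neighborFinset] at hk
  refine ⟨Function.update f x k, ?_⟩
  intro u v huv
  by_cases hu : u = x
  · subst hu
    rw [Function.update_self, Function.update_of_ne huv.ne']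
    exact fun h => hk v huv h.symm
  · by_cases hv : v = x
    · subst hv
      rw [Function.update_self, Function.update_of_ne huv.ne]
      exact hk u huv.symm
    · rw [Function.update_of_ne hu, Function.update_of_ne hv]
      exact hf u v hu hv huv

lemma cyc_out (hconn : G.Connected) (hd : ∀ v, G.degree v ≤ 3) (q : ℕ → V) (N : ℕ) (hN : 3 ≤ N)
    (hadj : ∀ i, G.Adj (q i) (q (i + 1))) (hqN : q N = q 0)
    (hinj : ∀ i < N, ∀ j < N, q i = q j → i = j)
    (w : V) (hw : ∀ i < N, q i ≠ w) (h0 : G.Adj (q 0) w)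
    (h1 : ∀ v, G.Adj (q 1) v → ∃ i < N, q i = v) :
    ∃ f : V → ZMod 3, ∀ u v, G.Adj u v → f u ≠ f v := by
  set C : Finset V := (Finset.range N).image q with hC
  have memC : ∀ v, v ∈ C ↔ ∃ i < N, q i = v := by intro v; simp [hC]
  have hq1C : q 1 ∈ C := (memC _).2 ⟨1, by omega, rfl⟩
  have hq0C : q 0 ∈ C := (memC _).2 ⟨0, by omega, rfl⟩
  have hwC : w ∉ C := by rw [memC]; rintro ⟨i, hi, h⟩; exact hw i hi h
  obtain ⟨f, hf⟩ := col_proper G hconn hd Cᶜ (q 0) (by simpa using hq0C)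
  set g := Function.update f (q 1) (f w) with hg
  have hgC : ∀ v, v ∉ C → g v = f v := by
    intro v hv
    rw [hg, Function.update_of_ne]
    rintro rfl; exact hv hq1C
  obtain ⟨f', hf1, hf2⟩ := greedy G (insert (q 1) Cᶜ) g (by
    intro u hu v hv huv
    simp only [Finset.mem_insert, Finset.mem_compl] at hu hv
    rcases hu with rfl | hu
    · exfalso
      rcases hv with rfl | hv
      · exact huv.ne rfl
      · exact hv ((memC _).2 (h1 v huv))
    · rcases hv with rfl | hv
      · exact absurd ((memC _).2 (h1 u huv.symm)) hu
      · rw [hgC u hu, hgC v hv]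
        exact hf u (by simpa using hu) v (by simpa using hv) huv) _
    ((Finset.Ico 2 N).image q) rfl (by
      rw [Finset.disjoint_left]
      intro v hv hv'
      simp only [Finset.mem_insert, Finset.mem_compl, Finset.mem_image, Finset.mem_Ico] at hv hv'
      obtain ⟨j, hj, rfl⟩ := hv'
      rcases hv with h | h
      · have := hinj _ hj.2 _ (by omega) h; omega
      · exact h ((memC _).2 ⟨j, hj.2, rfl⟩)) (by
      intro U' hU' hne
      set J := (Finset.Ico 2 N).filter (fun j => q j ∈ U') with hJ
      have hJne : J.Nonempty := by
        obtain ⟨v, hv⟩ := hne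
        have := hU' hv
        simp only [Finset.mem_image] at this
        obtain ⟨j, hj, rfl⟩ := this
        exact ⟨j, by simp only [hJ, Finset.mem_filter]; exact ⟨hj, hv⟩⟩
      have hm := J.max'_mem hJne
      set j := J.max' hJne with hj
      have hmax : ∀ i ∈ J, i ≤ j := fun i hi => J.le_max' i hi
      simp only [hJ, Finset.mem_filter, Finset.mem_Ico] at hm hmax
      refine ⟨q j, hm.2, card_inter_le G hd _ _ (q (j + 1)) (hadj j) ?_⟩
      simp only [Finset.mem_union, Finset.mem_insert, Finset.mem_compl]
      by_cases hjN : j + 1 < N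
      · rintro ((h | h) | h)
        · have := hinj _ hjN _ (by omega) h; omega
        · exact h ((memC _).2 ⟨_, hjN, rfl⟩)
        · have := hmax (j + 1) ⟨by omega, h⟩; omega
      · have : j + 1 = N := by omega
        rw [this, hqN]
        rintro ((h | h) | h)
        · have := hinj 0 (by omega) _ (by omega) h; omega
        · exact h hq0C
        · have := hU' h
          simp only [Finset.mem_image, Finset.mem_Ico] at this
          obtain ⟨i, hi, h⟩ := this
          have := hinj _ hi.2 0 (by omega) h; omega)
  have hall : ∀ v, v ≠ q 0 → v ∈ insert (q 1) Cᶜ ∪ (Finset.Ico 2 N).image q := by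
    intro v hv
    simp only [Finset.mem_union, Finset.mem_insert, Finset.mem_compl, Finset.mem_image, Finset.mem_Ico]
    by_cases hvC : v ∈ C
    · obtain ⟨i, hi, rfl⟩ := (memC v).1 hvC
      rcases i with _ | _ | i
      · exact absurd rfl hv
      · exact Or.inl (Or.inl rfl)
      · exact Or.inr ⟨_, ⟨by omega, hi⟩, rfl⟩
    · exact Or.inl (Or.inr hvC)
  apply extend_last G hd (q 0) (q 1) w f' (fun u v hu hv => hf2 u (hall u hu) v (hall v hv))
    (by rintro rfl; exact hwC hq1C) (hadj 0) h0
  rw [hf1, hf1, hgC w hwC, hg, Function.update_self]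
  · simp only [Finset.mem_image, Finset.mem_Ico]
    rintro ⟨i, hi, h⟩
    exact hw i hi.2 h
  · simp only [Finset.mem_image, Finset.mem_Ico]
    rintro ⟨i, hi, h⟩
    have := hinj _ hi.2 _ (by omega) h; omega

lemma cyc_ham (hd : ∀ v, G.degree v = 3) (q : ℕ → V) (N : ℕ) (hN : 3 ≤ N)
    (hadj : ∀ i, G.Adj (q i) (q (i + 1)))
    (hinj : ∀ i < N, ∀ j < N, q i = q j → i = j)
    (hall : ∀ v, ∃ i < N, q i = v) (h02 : ¬ G.Adj (q 0) (q 2)) :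
    ∃ f : V → ZMod 3, ∀ u v, G.Adj u v → f u ≠ f v := by
  have hd' : ∀ v, G.degree v ≤ 3 := fun v => (hd v).le
  have hthird : ∃ t, 3 ≤ t ∧ t < N ∧ G.Adj (q 1) (q t) := by
    by_contra! hc
    have : G.neighborFinset (q 1) ⊆ {q 0, q 2} := by
      intro v hv
      rw [SimpleGraph.mem_neighborFinset] at hv
      obtain ⟨i, hi, rfl⟩ := hall v
      rcases i with _ | _ | _ | i
      · simp
      · exact absurd rfl hv.ne
      · simp
      · exact absurd hv (hc _ (by omega) hi)
    have := (Finset.card_le_card this).trans Finset.card_le_two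
    rw [SimpleGraph.card_neighborFinset_eq_degree, hd] at this
    omega
  obtain ⟨t, ht3, htN, ht⟩ := hthird
  have h02ne : q 0 ≠ q 2 := fun h => by have := hinj _ (by omega) _ (by omega) h; omega
  obtain ⟨f', hf1, hf2⟩ := greedy G {q 0, q 2} (fun _ => 0) (by
    intro u hu v hv huv
    simp only [Finset.mem_insert, Finset.mem_singleton] at hu hv
    exfalso
    rcases hu with rfl | rfl <;> rcases hv with rfl | rfl
    · exact huv.ne rfl
    · exact h02 huv
    · exact h02 huv.symm
    · exact huv.ne rfl) _ ((Finset.Ico 3 N).image q) rfl (by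
      rw [Finset.disjoint_left]
      intro v hv hv'
      simp only [Finset.mem_insert, Finset.mem_singleton, Finset.mem_image, Finset.mem_Ico] at hv hv'
      obtain ⟨j, hj, rfl⟩ := hv'
      rcases hv with h | h <;>
      · have := hinj _ hj.2 _ (by omega) h; omega) (by
      intro U' hU' hne
      have hnS : ∀ j, 3 ≤ j → j < N → q j ∉ U' → q j ∉ ({q 0, q 2} : Finset V) ∪ U' := by
        intro j h3 hj h
        simp only [Finset.mem_union, Finset.mem_insert, Finset.mem_singleton]
        rintro ((h' | h') | h')
        · have := hinj _ hj _ (by omega) h'; omega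
        · have := hinj _ hj _ (by omega) h'; omega
        · exact h h'
      by_cases htU : q t ∈ U'
      · refine ⟨q t, htU, card_inter_le G hd' _ _ (q 1) ht.symm ?_⟩
        simp only [Finset.mem_union, Finset.mem_insert, Finset.mem_singleton]
        rintro ((h' | h') | h')
        · have := hinj _ (by omega) _ (by omega) h'; omega
        · have := hinj _ (by omega) _ (by omega) h'; omega
        · have := hU' h'
          simp only [Finset.mem_image, Finset.mem_Ico] at this
          obtain ⟨i, hi, h⟩ := this
          have := hinj _ hi.2 _ (by omega) h; omega
      · obtain ⟨v, hv⟩ := hne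
        have := hU' hv
        simp only [Finset.mem_image, Finset.mem_Ico] at this
        obtain ⟨j, hj, rfl⟩ := this
        by_contra! hc
        have step : ∀ a b, 3 ≤ a → a < N → 3 ≤ b → b < N → G.Adj (q a) (q b) → q a ∈ U' → q b ∈ U' := by
          intro a b ha haN hb hbN hab haU
          by_contra hbU
          have := card_inter_le G hd' _ _ _ hab (hnS b hb hbN hbU)
          have := hc _ haU
          omega
        rcases le_total j t with hjt | hjt
        · apply htU
          have : ∀ k, j + k < N → q (j + k) ∈ U' := by
            intro k
            induction k with
            | zero => intro _; exact hv
            | succ k ih =>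
              intro hk
              exact step (j + k) (j + k + 1) (by omega) (by omega) (by omega) hk (hadj _) (ih (by omega))
          have := this (t - j) (by omega)
          rwa [Nat.add_sub_cancel' hjt] at this
        · apply htU
          have : ∀ k, k ≤ j - t → q (j - k) ∈ U' := by
            intro k
            induction k with
            | zero => intro _; exact hv
            | succ k ih =>
              intro hk
              refine step (j - k) _ (by omega) (by omega) (by omega) (by omega) ?_ (ih (by omega))
              have := (hadj (j - (k + 1))).symm
              rwa [show j - (k + 1) + 1 = j - k by omega] at this
          have := this (j - t) le_rfl
          rwa [Nat.sub_sub_self hjt] at this)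
  have hall' : ∀ v, v ≠ q 1 → v ∈ ({q 0, q 2} : Finset V) ∪ (Finset.Ico 3 N).image q := by
    intro v hv
    simp only [Finset.mem_union, Finset.mem_insert, Finset.mem_singleton, Finset.mem_image, Finset.mem_Ico]
    obtain ⟨i, hi, rfl⟩ := hall v
    rcases i with _ | _ | _ | i
    · simp
    · exact absurd rfl hv
    · simp
    · exact Or.inr ⟨_, ⟨by omega, hi⟩, rfl⟩
  apply extend_last G hd' (q 1) (q 0) (q 2) f' (fun u v hu hv => hf2 u (hall' u hu) v (hall' v hv))
    h02ne (hadj 0).symm (hadj 1)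
  rw [hf1, hf1]
  all_goals
    simp only [Finset.mem_image, Finset.mem_Ico]
    rintro ⟨i, hi, h⟩
    have := hinj _ hi.2 _ (by omega) h; omega

lemma exists_cycle (hne : Nonempty V) (hd : ∀ v, G.degree v = 3) :
    ∃ (N : ℕ) (q : ℕ → V), 4 ≤ N ∧ (∀ i, G.Adj (q i) (q (i + 1))) ∧ (∀ i, q (i + N) = q i) ∧
      (∀ i < N, ∀ j < N, q i = q j → i = j) ∧ ∀ v, G.Adj (q 0) v → ∃ i < N, q i = v := by
  let P : ℕ → Prop := fun n => ∃ p : ℕ → V, (∀ i < n, G.Adj (p i) (p (i + 1))) ∧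
    ∀ i ≤ n, ∀ j ≤ n, p i = p j → i = j
  have hP0 : P 0 := ⟨fun _ => hne.some, by simp, by intro i hi j hj _; omega⟩
  have hPb : ∀ n, P n → n ≤ Fintype.card V := by
    rintro n ⟨p, -, hp⟩
    have : ((Finset.range (n + 1)).image p).card = n + 1 := by
      rw [Finset.card_image_of_injOn, Finset.card_range]
      intro i hi j hj h
      simp at hi hj
      exact hp i (by omega) j (by omega) h
    have := Finset.card_le_univ ((Finset.range (n + 1)).image p)
    omega
  have hmaxn : ∃ n, P n ∧ ¬ P (n + 1) := by
    by_contra! hc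
    have : ∀ n, P n := fun n => by
      induction n with
      | zero => exact hP0
      | succ n ih => exact hc n ih
    have := hPb _ (this (Fintype.card V + 1))
    omega
  obtain ⟨n, ⟨p, hp1, hp2⟩, hn⟩ := hmaxn
  have hnb : ∀ v, G.Adj (p 0) v → ∃ i ≤ n, p i = v := by
    intro v hv
    by_contra! hc
    apply hn
    refine ⟨fun i => if i = 0 then v else p (i - 1), ?_, ?_⟩
    · intro i hi
      rcases i with _ | i
      · simpa using hv.symm
      · simpa using hp1 i (by omega)
    · intro i hi j hj h
      rcases i with _ | i <;> rcases j with _ | j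
      · rfl
      · simp at h; exact absurd h.symm (hc j (by omega))
      · simp at h; exact absurd h (hc i (by omega))
      · simp at h; have := hp2 i (by omega) j (by omega) h; omega
  set J := (Finset.range (n + 1)).filter (fun i => G.Adj (p 0) (p i)) with hJ
  have hsub : G.neighborFinset (p 0) ⊆ J.image p := by
    intro v hv
    rw [SimpleGraph.mem_neighborFinset] at hv
    obtain ⟨i, hi, rfl⟩ := hnb v hv
    simp only [Finset.mem_image, hJ, Finset.mem_filter, Finset.mem_range]
    exact ⟨i, ⟨by omega, hv⟩, rfl⟩
  have hcard := (Finset.card_le_card hsub).trans Finset.card_image_le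
  rw [SimpleGraph.card_neighborFinset_eq_degree, hd] at hcard
  have hJne : J.Nonempty := by rw [← Finset.card_pos]; omega
  have hm := J.max'_mem hJne
  set m := J.max' hJne with hmdef
  have hmax : ∀ i ∈ J, i ≤ m := fun i hi => J.le_max' i hi
  have hm3 : 3 ≤ m := by
    have : J ⊆ Finset.Icc 1 m := by
      intro i hi
      rw [Finset.mem_Icc]
      refine ⟨?_, hmax i hi⟩
      rcases i with _ | i
      · simp [hJ] at hi
      · omega
    have := Finset.card_le_card this
    simp at this
    omega
  simp only [hJ, Finset.mem_filter, Finset.mem_range] at hm hmax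
  refine ⟨m + 1, fun i => p (i % (m + 1)), by omega, ?_, ?_, ?_, ?_⟩
  · intro i
    have hlt := Nat.mod_lt i (show 0 < m + 1 by omega)
    by_cases h : i % (m + 1) = m
    · have : (i + 1) % (m + 1) = 0 := by rw [Nat.add_mod, h]; simp
      simp only [h, this]
      exact hm.2.symm
    · have : (i + 1) % (m + 1) = i % (m + 1) + 1 := by
        rw [Nat.add_mod, Nat.mod_eq_of_lt (show 1 < m + 1 by omega), Nat.mod_eq_of_lt]; omega
      simp only [this]
      exact hp1 _ (by omega)
  · intro i; simp
  · intro i hi j hj h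
    simp only [Nat.mod_eq_of_lt hi, Nat.mod_eq_of_lt hj] at h
    exact hp2 i (by omega) j (by omega) h
  · intro v hv
    simp only [Nat.zero_mod] at hv
    obtain ⟨i, hi, rfl⟩ := hnb v hv
    have := hmax i ⟨by omega, hv⟩
    exact ⟨i, by omega, by simp only [Nat.mod_eq_of_lt (show i < m + 1 by omega)]⟩

lemma brooks3 (hconn : G.Connected) (hd : ∀ v, G.degree v = 3) :
    (∃ f : V → ZMod 3, ∀ u v, G.Adj u v → f u ≠ f v) ∨
    ∃ a b c d : V, G.Adj a b ∧ G.Adj a c ∧ G.Adj a d ∧ G.Adj b c ∧ G.Adj b d ∧ G.Adj c d ∧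
      ∀ v, v = a ∨ v = b ∨ v = c ∨ v = d := by
  obtain ⟨N, q, hN, hadj, hper, hinj, h0⟩ := exists_cycle G hconn.nonempty hd
  have hinj' : ∀ s, ∀ i < N, ∀ j < N, q (s + i) = q (s + j) → i = j := by
    intro s
    have hmod : ∀ i, q i = q (i % N) := by
      intro i
      have : ∀ k i, q (i + N * k) = q i := by
        intro k
        induction k with
        | zero => intro i; rfl
        | succ k ih => intro i; rw [Nat.mul_succ, ← add_assoc, hper, ih]
      conv_lhs => rw [← Nat.mod_add_div i N, this]
    intro i hi j hj h
    rw [hmod (s + i), hmod (s + j)] at h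
    have h2 := hinj _ (Nat.mod_lt _ (by omega)) _ (Nat.mod_lt _ (by omega)) h
    have h3 : i ≡ j [MOD N] := Nat.ModEq.add_left_cancel' s h2
    rwa [Nat.ModEq, Nat.mod_eq_of_lt hi, Nat.mod_eq_of_lt hj] at h3
  have hcov : ∀ s v, (∃ i < N, q i = v) → ∃ i < N, q (s + i) = v := by
    intro s
    induction s with
    | zero => intro v h; simpa using h
    | succ s ih =>
      intro v h
      obtain ⟨i, hi, rfl⟩ := ih v h
      rcases i with _ | i
      · refine ⟨N - 1, by omega, ?_⟩
        rw [show s + 1 + (N - 1) = s + N by omega, hper]; rfl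
      · exact ⟨i, by omega, by congr 1; omega⟩
  have hcov' : ∀ s v, (∃ i < N, q (s + i) = v) → ∃ i < N, q i = v := by
    intro s
    induction s with
    | zero => intro v h; simpa using h
    | succ s ih =>
      rintro v ⟨i, hi, rfl⟩
      apply ih
      by_cases h : i + 1 < N
      · exact ⟨i + 1, h, by congr 1; omega⟩
      · refine ⟨0, by omega, ?_⟩
        rw [show s + 1 + i = s + N by omega, hper]; rfl
  by_cases hall : ∀ v, ∃ i < N, q i = v
  · by_cases h2 : ∀ i, G.Adj (q i) (q (i + 2))
    · right
      have hN4 : N = 4 := by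
        by_contra hne
        have hsub : ({q 0, q 1, q 3, q 4} : Finset V) ⊆ G.neighborFinset (q 2) := by
          intro v hv
          simp only [Finset.mem_insert, Finset.mem_singleton] at hv
          rw [SimpleGraph.mem_neighborFinset]
          rcases hv with rfl | rfl | rfl | rfl
          · exact (h2 0).symm
          · exact (hadj 1).symm
          · exact hadj 2
          · exact h2 2
        have hc := Finset.card_le_card hsub
        rw [SimpleGraph.card_neighborFinset_eq_degree, hd] at hc
        have hi : ∀ i < 5, ∀ j < 5, i ≠ j → q i ≠ q j := fun i hi j hj hij h =>
          hij (hinj i (by omega) j (by omega) h)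
        rw [Finset.card_insert_of_notMem, Finset.card_insert_of_notMem, Finset.card_pair] at hc
        · omega
        · exact hi _ (by omega) _ (by omega) (by omega)
        · simp [hi 1 (by omega) 3 (by omega) (by omega), hi 1 (by omega) 4 (by omega) (by omega)]
        · simp [hi 0 (by omega) 1 (by omega) (by omega), hi 0 (by omega) 3 (by omega) (by omega), hi 0 (by omega) 4 (by omega) (by omega)]
      subst hN4
      refine ⟨q 0, q 1, q 2, q 3, hadj 0, h2 0, ?_, hadj 1, h2 1, hadj 2, ?_⟩
      · have := (hadj 3).symm
        rwa [show 3 + 1 = 0 + 4 by rfl, hper] at this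
      · intro v
        obtain ⟨i, hi, rfl⟩ := hall v
        interval_cases i <;> simp
    · left
      push Not at h2
      obtain ⟨s, hs⟩ := h2
      exact cyc_ham G hd (fun i => q (s + i)) N (by omega) (fun i => hadj (s + i)) (hinj' s)
        (fun v => hcov s v (hall v)) hs
  · left
    push Not at hall
    obtain ⟨z, hz⟩ := hall
    obtain ⟨v, hv, w, hw, hvw⟩ := exists_out G hconn ((Finset.range N).image q)
      ⟨q 0, by simp only [Finset.mem_image, Finset.mem_range]; exact ⟨0, by omega, rfl⟩⟩ z (by
        simp only [Finset.mem_image, Finset.mem_range]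
        rintro ⟨i, hi, h⟩; exact hz i hi h)
    simp only [Finset.mem_image, Finset.mem_range] at hv hw
    obtain ⟨i0, hi0, rfl⟩ := hv
    have : ∃ s, (∃ w, (¬ ∃ i < N, q i = w) ∧ G.Adj (q s) w) ∧
        ¬ (∃ w, (¬ ∃ i < N, q i = w) ∧ G.Adj (q (s + 1)) w) := by
      by_contra! hc
      have : ∀ k, ∃ w, (¬ ∃ i < N, q i = w) ∧ G.Adj (q (i0 + k)) w := by
        intro k
        induction k with
        | zero => exact ⟨w, hw, hvw⟩
        | succ k ih => 
          have := hc (i0 + k) (by simpa using ih)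
          simpa [add_assoc] using this
      obtain ⟨w, hw, h⟩ := this (N - i0)
      rw [Nat.add_sub_cancel' hi0.le] at h
      have := hper 0
      rw [zero_add] at this
      rw [this] at h
      exact hw (h0 w h)
    obtain ⟨s, ⟨w, hw, hsw⟩, hs⟩ := this
    refine cyc_out G hconn (fun v => (hd v).le) (fun i => q (s + i)) N (by omega)
      (fun i => hadj (s + i)) (hper s) (hinj' s) w ?_ hsw ?_
    · intro i hi h
      exact hw (hcov' s w ⟨i, hi, h⟩)
    · intro v hv
      apply hcov
      by_contra hh
      exact hs ⟨v, hh, hv⟩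

lemma k4_case (a b c d : V) (hab : G.Adj a b) (hac : G.Adj a c) (had : G.Adj a d) (hbc : G.Adj b c)
    (hbd : G.Adj b d) (hcd : G.Adj c d) (hall : ∀ v, v = a ∨ v = b ∨ v = c ∨ v = d)
    (hd : ∀ v, G.degree v = 3) : LIRtwoLE2 G := by
  let r : Sym2 V → ℕ := fun e => if e = s(b, d) then 1 else if e = s(c, d) then 2 else 0
  have hr : ∀ e, r e ≤ 2 := fun e => by simp only [r]; split_ifs <;> omega
  have n1 := hab.ne
  have n2 := hac.ne
  have n3 := had.ne
  have n4 := hbc.ne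
  have n5 := hbd.ne
  have n6 := hcd.ne
  have key : ∀ x y z w : V, y ≠ z → y ≠ w → z ≠ w → G.Adj x y → G.Adj x z → G.Adj x w →
      redDeg G r x = r s(x, y) + (r s(x, z) + r s(x, w)) := by
    intro x y z w h1 h2 h3 e1 e2 e3
    have : G.neighborFinset x = {y, z, w} := by
      symm
      apply Finset.eq_of_subset_of_card_le
      · intro v hv
        simp only [Finset.mem_insert, Finset.mem_singleton] at hv
        rw [SimpleGraph.mem_neighborFinset]
        rcases hv with rfl | rfl | rfl <;> assumption
      · rw [SimpleGraph.card_neighborFinset_eq_degree, hd, Finset.card_insert_of_notMem (by simp [h1, h2]),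
          Finset.card_pair h3]
    unfold redDeg
    rw [sum_inc, this, Finset.sum_insert (by simp [h1, h2]), Finset.sum_pair h3]
  have ra : redDeg G r a = 0 := by
    rw [key a b c d n4 n5 n6 hab hac had]
    simp [r, n1, n2, n3]
  have rb : redDeg G r b = 1 := by
    rw [key b a c d n2 n3 n6 hab.symm hbc hbd]
    simp [r, n1, n2, n3, n4, n5, n6, n1.symm]
  have rc : redDeg G r c = 2 := by
    rw [key c a b d n1 n3 n5 hac.symm hbc.symm hcd]
    simp [r, n1, n2, n3, n4, n5, n6, n4.symm, n2.symm]
  have rd : redDeg G r d = 3 := by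
    rw [key d a b c n1 n2 n4 had.symm hbd.symm hcd.symm]
    simp [r, n1, n2, n3, n4, n5, n6, n4.symm, n2.symm, n5.symm, n6.symm]
  refine ⟨r, fun e _ => hr e, ?_⟩
  have hs := red_add_blue G r hr
  have hne : ∀ u v, G.Adj u v → redDeg G r u ≠ redDeg G r v := by
    intro u v huv
    rcases hall u with rfl | rfl | rfl | rfl <;> rcases hall v with rfl | rfl | rfl | rfl <;>
      first | exact absurd rfl huv.ne | (simp only [ra, rb, rc, rd]; omega)
  intro u v huv
  refine ⟨fun _ => hne u v huv, fun _ => ?_⟩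
  have := hne u v huv
  have h1 := hs u
  have h2 := hs v
  rw [hd] at h1 h2
  omega

end brooks

section paths
variable {V : Type*} [Fintype V] [DecidableEq V] (G : SimpleGraph V)

lemma other_nbr (y z : V) (h2 : G.degree y = 2) (hyz : G.Adj y z) :
    ∃ y', y' ≠ z ∧ G.Adj y y' ∧ ∀ w, G.Adj y w → w = z ∨ w = y' := by
  rw [← SimpleGraph.card_neighborFinset_eq_degree] at h2
  have h1 : ((G.neighborFinset y).erase z).card = 1 := by
    rw [Finset.card_erase_of_mem (by simpa using hyz), h2]
  obtain ⟨y', hy'⟩ := Finset.card_eq_one.1 h1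
  have hm : ∀ w, w ∈ (G.neighborFinset y).erase z ↔ w = y' := by intro w; rw [hy']; simp
  simp only [Finset.mem_erase, SimpleGraph.mem_neighborFinset] at hm
  refine ⟨y', ((hm y').2 rfl).1, ((hm y').2 rfl).2, ?_⟩
  intro w hw
  by_cases h : w = z
  · exact Or.inl h
  · exact Or.inr ((hm w).1 ⟨h, hw⟩)

lemma two_nbrs (y : V) (h2 : G.degree y = 2) :
    ∃ a b, a ≠ b ∧ G.Adj y a ∧ G.Adj y b ∧ ∀ w, G.Adj y w → w = a ∨ w = b := by
  have : 0 < (G.neighborFinset y).card := by rw [SimpleGraph.card_neighborFinset_eq_degree, h2]; omega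
  obtain ⟨a, ha⟩ := Finset.card_pos.1 this
  rw [SimpleGraph.mem_neighborFinset] at ha
  obtain ⟨b, h1, h3, h4⟩ := other_nbr G y a h2 ha
  exact ⟨a, b, h1.symm, ha, h3, h4⟩

lemma pick_colors : ∀ p q s : ZMod 3, s ≠ 0 → ∃ k l : ZMod 3, k ≠ p ∧ l ≠ q ∧ k - l = s := by
  decide

lemma flex (D : Set V) (hD2 : ∀ x ∈ D, G.degree x = 2) (c : V → ZMod 3) (hc : Valid G D c)
    (y z : V) (hy : y ∈ D) (hz : z ∈ D) (hyz : G.Adj y z) (hyi : ∀ w, G.Adj y w → w ∈ D)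
    (hzi : ∀ w, G.Adj z w → w ∈ D) (s : ZMod 3) (hs : s ≠ 0) :
    ∃ c', Valid G D c' ∧ (∀ v, v ≠ y → v ≠ z → c' v = c v) ∧ c' y - c' z = s := by
  obtain ⟨y', h1, h2, h3⟩ := other_nbr G y z (hD2 y hy) hyz
  obtain ⟨z', g1, g2, g3⟩ := other_nbr G z y (hD2 z hz) hyz.symm
  obtain ⟨k, l, hk, hl, hkl⟩ := pick_colors (c y') (c z') s hs
  have hkl' : k ≠ l := by rintro rfl; simp at hkl; exact hs hkl.symm
  have hne := hyz.ne
  let c' : V → ZMod 3 := fun v => if v = y then k else if v = z then l else c v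
  have cy : c' y = k := by simp [c']
  have cz : c' z = l := by simp [c', hne.symm]
  have co : ∀ v, v ≠ y → v ≠ z → c' v = c v := by intro v a b; simp [c', a, b]
  have ey : ∀ w, G.Adj y w → c' w ≠ k := by
    intro w hw
    rcases h3 w hw with rfl | rfl
    · rw [cz]; exact hkl'.symm
    · rw [co _ hw.ne' h1]; exact hk.symm
  have ez : ∀ w, G.Adj z w → c' w ≠ l := by
    intro w hw
    rcases g3 w hw with rfl | rfl
    · rw [cy]; exact hkl'
    · rw [co _ g1 hw.ne']; exact hl.symm
  refine ⟨c', ?_, co, by rw [cy, cz, hkl]⟩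
  intro u v huv
  constructor
  · by_cases huy : u = y
    · subst huy; rw [cy]; exact (ey v huv).symm
    by_cases huz : u = z
    · subst huz; rw [cz]; exact (ez v huv).symm
    by_cases hvy : v = y
    · subst hvy; rw [cy]; exact ey u huv.symm
    by_cases hvz : v = z
    · subst hvz; rw [cz]; exact ez u huv.symm
    rw [co u huy huz, co v hvy hvz]
    exact (hc u v huv).1
  · intro hu hv
    rw [co u (by rintro rfl; exact hu hy) (by rintro rfl; exact hu hz),
      co v (by rintro rfl; exact hu (hyi u huv.symm)) (by rintro rfl; exact hu (hzi u huv.symm))]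
    exact (hc u v huv).2 hu hv

lemma extD (D : Set V) (hD2 : ∀ x ∈ D, G.degree x = 2)
    (E1 : ∀ x ∈ D, ∀ u u', G.Adj x u → u ∉ D → G.Adj x u' → u' ∉ D → u = u')
    (E2 : ∀ x ∈ D, ∀ x' ∈ D, G.Adj x x' → ∀ u u', G.Adj x u → u ∉ D → G.Adj x' u' → u' ∉ D → False)
    (f : V → ZMod 3) (hf : ∀ u v, u ∉ D → v ∉ D → G.Adj u v → f u ≠ f v) :
    ∃ c, Valid G D c ∧ ∀ v, v ∉ D → c v = f v := by
  let g : V → ZMod 3 := fun v => if v ∈ D then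
    (if h : ∃ u, G.Adj v u ∧ u ∉ D then f h.choose - 1 else 0) else f v
  have g1 : ∀ v, v ∉ D → g v = f v := fun v hv => by simp [g, hv]
  have g2 : ∀ v ∈ D, ∀ u, G.Adj v u → u ∉ D → g v = f u - 1 := by
    intro v hv u huv hu
    have h : ∃ u, G.Adj v u ∧ u ∉ D := ⟨u, huv, hu⟩
    simp only [g, if_pos hv, dif_pos h]
    rw [E1 v hv _ u h.choose_spec.1 h.choose_spec.2 huv hu]
  let S : Finset V := Finset.univ.filter (fun v => v ∉ D ∨ ∃ u, G.Adj v u ∧ u ∉ D)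
  have hS : ∀ v, v ∈ S ↔ v ∉ D ∨ ∃ u, G.Adj v u ∧ u ∉ D := by intro v; simp [S]
  have ne1 : ∀ a : ZMod 3, a ≠ a - 1 := by decide
  obtain ⟨c, hc1, hc2⟩ := greedy G S g (by
    intro u hu v hv huv
    by_cases huD : u ∈ D <;> by_cases hvD : v ∈ D
    · obtain ⟨a, ha, ha'⟩ := ((hS u).1 hu).resolve_left (by simpa using huD)
      obtain ⟨b, hb, hb'⟩ := ((hS v).1 hv).resolve_left (by simpa using hvD)
      exact (E2 u huD v hvD huv a b ha ha' hb hb').elim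
    · rw [g2 u huD v huv hvD, g1 v hvD]; exact (ne1 _).symm
    · rw [g2 v hvD u huv.symm huD, g1 u huD]; exact ne1 _
    · rw [g1 u huD, g1 v hvD]; exact hf u v huD hvD huv) _ Sᶜ rfl disjoint_compl_right (by
      rintro U' hU' ⟨v, hv⟩
      refine ⟨v, hv, (Finset.card_le_card Finset.inter_subset_left).trans ?_⟩
      rw [SimpleGraph.card_neighborFinset_eq_degree]
      have := hU' hv
      rw [Finset.mem_compl, hS] at this
      push Not at this
      exact (hD2 v this.1).le)
  have hc3 : ∀ v ∈ S, c v = g v := fun v hv => hc1 v (by simpa using hv)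
  refine ⟨c, ?_, ?_⟩
  · intro u v huv
    refine ⟨hc2 u (by simp) v (by simp) huv, ?_⟩
    intro hu hv
    rw [hc3 u ((hS u).2 (Or.inl hu)), hc3 v ((hS v).2 (Or.inr ⟨u, huv.symm, hu⟩)), g1 u hu,
      g2 v hv u huv.symm hu]
    ring
  · intro v hv
    rw [hc3 v ((hS v).2 (Or.inl hv)), g1 v hv]

lemma sum_two (φ c c' : V → ZMod 3) (y z : V) (hyz : y ≠ z) (h : ∀ v, v ≠ y → v ≠ z → c' v = c v) :
    ∑ v, φ v * c' v = ∑ v, φ v * c v + φ y * (c' y - c y) + φ z * (c' z - c z) := by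
  have : ∑ v, φ v * c' v - ∑ v, φ v * c v = φ y * (c' y - c y) + φ z * (c' z - c z) := by
    rw [← Finset.sum_sub_distrib, ← Finset.sum_subset (Finset.subset_univ {y, z}), Finset.sum_pair hyz]
    · ring
    · intro x _ hx
      simp only [Finset.mem_insert, Finset.mem_singleton, not_or] at hx
      rw [h x hx.1 hx.2]; ring
  linear_combination this

lemma sum_one (φ c : V → ZMod 3) (y : V) (k : ZMod 3) :
    ∑ v, φ v * Function.update c y k v = ∑ v, φ v * c v + φ y * (k - c y) := by
  have : ∑ v, φ v * Function.update c y k v - ∑ v, φ v * c v = φ y * (k - c y) := by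
    rw [← Finset.sum_sub_distrib, Finset.sum_eq_single y]
    · simp; ring
    · intro x _ hx
      rw [Function.update_of_ne hx]; ring
    · simp
  linear_combination this

lemma solve_s : ∀ a R : ZMod 3, a ≠ 0 → R ≠ 0 → ∃ s, s ≠ 0 ∧ R + a * s = 0 := by decide

lemma reach (D : Set V) (hD2 : ∀ x ∈ D, G.degree x = 2)
    (y z : V) (hy : y ∈ D) (hz : z ∈ D) (hyz : G.Adj y z) (hyi : ∀ w, G.Adj y w → w ∈ D)
    (hzi : ∀ w, G.Adj z w → w ∈ D) (φ : V → ZMod 3) (hφ : ∀ u v, G.Adj u v → φ u + φ v = 0)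
    (hφy : φ y ≠ 0) (c₁ c₂ : V → ZMod 3) (h₁ : Valid G D c₁) (h₂ : Valid G D c₂)
    (ey : c₁ y = c₂ y) (ez : c₁ z = c₂ z) (hT : ∑ v, φ v * c₁ v ≠ ∑ v, φ v * c₂ v) :
    ∃ c, Valid G D c ∧ ∑ v, φ v * c v = 0 := by
  have main : ∀ c, Valid G D c → ∑ v, φ v * c v - φ y * (c y - c z) ≠ 0 →
      ∃ c, Valid G D c ∧ ∑ v, φ v * c v = 0 := by
    intro c hc hR
    obtain ⟨s, hs, hs2⟩ := solve_s _ _ hφy hR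
    obtain ⟨c', hc', h1, h2⟩ := flex G D hD2 c hc y z hy hz hyz hyi hzi s hs
    refine ⟨c', hc', ?_⟩
    rw [sum_two φ c c' y z hyz.ne h1]
    linear_combination hs2 + φ y * h2 + (c' z - c z) * hφ y z hyz
  by_cases hR : ∑ v, φ v * c₁ v - φ y * (c₁ y - c₁ z) = 0
  · apply main c₂ h₂
    intro h
    apply hT
    rw [← ey, ← ez] at h
    linear_combination hR - h
  · exact main c₁ h₁ hR

lemma antisym_zero (hconn : G.Connected) (φ : V → ZMod 3) (hφ : ∀ u v, G.Adj u v → φ u + φ v = 0)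
    (v₀ : V) (h0 : φ v₀ = 0) : ∀ v, φ v = 0 := by
  by_contra! hc
  obtain ⟨z, hz⟩ := hc
  obtain ⟨v, hv, w, hw, hvw⟩ := exists_out G hconn (Finset.univ.filter (fun v => φ v = 0))
    ⟨v₀, by simpa using h0⟩ z (by simpa using hz)
  simp only [Finset.mem_filter, Finset.mem_univ, true_and] at hv hw
  have := hφ v w hvw
  rw [hv, zero_add] at this
  exact hw this

lemma bip_alt : ∀ a b β : ZMod 3, a + b = 0 → a ≠ 0 → β ≠ 0 → (a = β ∧ b ≠ β ∨ a ≠ β ∧ b = β) := by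
  have h1 : ∀ a b β : ZMod 3, a + b = 0 → a ≠ 0 → β ≠ 0 → a = β → b ≠ β := by decide
  have h2 : ∀ a b β : ZMod 3, a + b = 0 → a ≠ 0 → β ≠ 0 → a ≠ β → b = β := by decide
  intro a b β x y z
  by_cases h : a = β
  · exact Or.inl ⟨h, h1 a b β x y z h⟩
  · exact Or.inr ⟨h, h2 a b β x y z h⟩

lemma bip_proper (φ : V → ZMod 3) (hφ : ∀ u v, G.Adj u v → φ u + φ v = 0) (hn : ∀ v, φ v ≠ 0)
    (β : ZMod 3) (hβ : β ≠ 0) (c : V → ZMod 3) (hc : ∀ v, c v = 0 ↔ φ v ≠ β) :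
    ∀ u v, G.Adj u v → c u ≠ c v := by
  intro u v huv h
  have h1 := hc u
  have h2 := hc v
  rw [h] at h1
  rcases bip_alt _ _ β (hφ u v huv) (hn u) hβ with h | h <;> tauto

lemma bip_cubic (hconn : G.Connected) (hd : ∀ v, G.degree v = 3) (φ : V → ZMod 3)
    (hφ : ∀ u v, G.Adj u v → φ u + φ v = 0) (hn : ∀ v, φ v ≠ 0) :
    ∃ c : V → ZMod 3, (∀ u v, G.Adj u v → c u ≠ c v) ∧ ∑ v, φ v * c v = 0 := by
  obtain ⟨w⟩ := hconn.nonempty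
  have : 1 < (G.neighborFinset w).card := by
    rw [SimpleGraph.card_neighborFinset_eq_degree, hd]; omega
  obtain ⟨a, ha, b, hb, hab⟩ := Finset.one_lt_card.1 this
  rw [SimpleGraph.mem_neighborFinset] at ha hb
  have hφab : φ b = φ a := by linear_combination hφ w b hb - hφ w a ha
  let c : V → ZMod 3 := fun v => if φ v = φ a then 1 else 0
  have hca : c a = 1 := by simp [c]
  have hcb : c b = 1 := by simp [c, hφab]
  have h20 : (2 : ZMod 3) ≠ 0 := by decide
  have h10 : (1 : ZMod 3) ≠ 0 := by decide
  have hc0 : ∀ v, c v = 0 ↔ φ v ≠ φ a := by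
    intro v; simp only [c]; split_ifs with h <;> simp [h]
  have hc1 : ∀ v, Function.update c a 2 v = 0 ↔ φ v ≠ φ a := by
    intro v
    by_cases h : v = a
    · subst h; simp [h20]
    · rw [Function.update_of_ne h]; exact hc0 v
  have hc2 : ∀ v, Function.update (Function.update c a 2) b 2 v = 0 ↔ φ v ≠ φ a := by
    intro v
    by_cases h : v = b
    · subst h; simp [h20, hφab]
    · rw [Function.update_of_ne h]; exact hc1 v
  have three : ∀ T p : ZMod 3, p ≠ 0 → T = 0 ∨ T + p = 0 ∨ T + p + p = 0 := by decide
  have s1 := sum_one φ c a 2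
  have s2 := sum_one φ (Function.update c a 2) b 2
  rw [Function.update_of_ne hab.symm, hcb, hφab, s1, hca] at s2
  rw [hca] at s1
  rcases three (∑ v, φ v * c v) (φ a) (hn a) with h | h | h
  · exact ⟨c, bip_proper G φ hφ hn _ (hn a) c hc0, h⟩
  · refine ⟨_, bip_proper G φ hφ hn _ (hn a) _ hc1, ?_⟩
    rw [s1]; linear_combination h
  · refine ⟨_, bip_proper G φ hφ hn _ (hn a) _ hc2, ?_⟩
    rw [s2]; linear_combination h

end paths

/-- Let `G` be a connected simple graph in which every vertex has degree 2 or
3, such that (with `D` the set of degree-2 vertices and `H` the subgraph of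
`G` induced on `D`) every connected component of `H` is a path with at least
4 vertices (i.e. `H` is acyclic with maximum degree at most 2 and every
component has at least 4 vertices), the ends of each such component path have
degree-3 neighbors in `G` which are distinct and non-adjacent, and distinct
component paths attach to distinct pairs of degree-3 vertices.  (Equivalently,
`G` is obtained from a cubic graph by replacing some of its edges with
internally disjoint paths of length at least 5.)  Then `lir(²G) ≤ 2`. -/
theorem lir_two_mul_cubic_subdivided {V : Type*} [Fintype V] [DecidableEq V]
    (G : SimpleGraph V) (hconn : G.Connected)
    (hdeg : ∀ v : V, G.degree v = 2 ∨ G.degree v = 3)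
    (D : Set V) (hD : D = {v : V | G.degree v = 2})
    (H : SimpleGraph D) (hH : H = G.induce D)
    -- every component of `H` is a path with at least 4 vertices:
    (hacyc : H.IsAcyclic)
    (hmax : ∀ x : D, H.degree x ≤ 2)
    (hbig : ∀ x : D, 4 ≤ (H.connectedComponentMk x).supp.ncard)
    -- the ends of each component path attach to distinct non-adjacent
    -- degree-3 vertices of `G`:
    (hends : ∀ x y : D, H.connectedComponentMk x = H.connectedComponentMk y →
      x ≠ y → H.degree x ≤ 1 → H.degree y ≤ 1 →
      ∀ u v : V, G.Adj (x : V) u → u ∉ D → G.Adj (y : V) v → v ∉ D →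
        u ≠ v ∧ ¬ G.Adj u v)
    -- distinct component paths attach to distinct pairs of degree-3 vertices:
    (hdistinct : ∀ x₁ y₁ x₂ y₂ : D,
      H.connectedComponentMk x₁ = H.connectedComponentMk y₁ →
      H.connectedComponentMk x₂ = H.connectedComponentMk y₂ →
      H.connectedComponentMk x₁ ≠ H.connectedComponentMk x₂ →
      x₁ ≠ y₁ → x₂ ≠ y₂ →
      H.degree x₁ ≤ 1 → H.degree y₁ ≤ 1 → H.degree x₂ ≤ 1 → H.degree y₂ ≤ 1 →
      ∀ u₁ v₁ u₂ v₂ : V,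
        G.Adj (x₁ : V) u₁ → u₁ ∉ D → G.Adj (y₁ : V) v₁ → v₁ ∉ D →
        G.Adj (x₂ : V) u₂ → u₂ ∉ D → G.Adj (y₂ : V) v₂ → v₂ ∉ D →
        s(u₁, v₁) ≠ s(u₂, v₂)) :
    LIRtwoLE2 G := by
  have hD2 : ∀ x ∈ D, G.degree x = 2 := by intro x hx; rw [hD] at hx; exact hx
  have hD3 : ∀ x, x ∉ D → G.degree x = 3 := by
    intro x hx
    rcases hdeg x with h | h
    · exact absurd (by rw [hD]; exact h) hx
    · exact h
  have hHadj : ∀ a b : D, H.Adj a b ↔ G.Adj (a : V) b := by intro a b; rw [hH]; rfl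
  have hle3 : ∀ v, G.degree v ≤ 3 := by intro v; rcases hdeg v with h | h <;> omega
  -- closed sets are big
  have hclosed : ∀ T : Finset V, ∀ x ∈ D, x ∈ T →
      (∀ a ∈ T, a ∈ D → ∀ b ∈ D, G.Adj a b → b ∈ T) → 4 ≤ T.card := by
    intro T x hx hxT hcl
    have hw : ∀ (a b : D) (p : H.Walk a b), (a : V) ∈ T → (b : V) ∈ T := by
      intro a b p
      induction p with
      | nil => exact id
      | cons h p ih => exact fun ha => ih (hcl _ ha (Subtype.coe_prop _) _ (Subtype.coe_prop _) ((hHadj _ _).1 h))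
    have h4 := hbig ⟨x, hx⟩
    have himg : (Subtype.val '' (H.connectedComponentMk ⟨x, hx⟩).supp : Set V) ⊆ (T : Set V) := by
      rintro _ ⟨b, hb, rfl⟩
      rw [SimpleGraph.ConnectedComponent.mem_supp_iff, SimpleGraph.ConnectedComponent.eq] at hb
      obtain ⟨p⟩ := hb.symm
      exact hw _ _ p hxT
    have := Set.ncard_le_ncard himg (Finset.finite_toSet T)
    rw [Set.ncard_image_of_injective _ Subtype.val_injective, Set.ncard_coe_finset] at this
    omega
  have E1 : ∀ x ∈ D, ∀ u u', G.Adj x u → u ∉ D → G.Adj x u' → u' ∉ D → u = u' := by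
    intro x hx u u' hu huD hu' huD'
    by_contra hne
    obtain ⟨y, h1, h2, h3⟩ := other_nbr G x u (hD2 x hx) hu
    have := hclosed {x} x hx (by simp) (by
      intro a ha _ b hb hab
      rw [Finset.mem_singleton] at ha
      subst ha
      have hy : u' = y := (h3 u' hu').resolve_left (Ne.symm hne)
      rcases h3 b hab with rfl | rfl
      · exact absurd hb huD
      · exact absurd (hy ▸ hb) huD')
    simp at this
  -- non-interior vertices have a single neighbour in `D`
  have E0 : ∀ x ∈ D, ∀ u, G.Adj x u → u ∉ D → ∃ a ∈ D, G.Adj x a ∧ ∀ w ∈ D, G.Adj x w → w = a := by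
    intro x hx u hu huD
    obtain ⟨y, h1, h2, h3⟩ := other_nbr G x u (hD2 x hx) hu
    have hyD : y ∈ D := by
      by_contra h
      exact h1 (E1 x hx y u h2 h hu huD)
    refine ⟨y, hyD, h2, ?_⟩
    intro w hw hxw
    rcases h3 w hxw with rfl | rfl
    · exact absurd hw huD
    · rfl
  have E2 : ∀ x ∈ D, ∀ x' ∈ D, G.Adj x x' → ∀ u u', G.Adj x u → u ∉ D → G.Adj x' u' → u' ∉ D →
      False := by
    intro x hx x' hx' hxx u u' hu huD hu' huD'
    obtain ⟨a, ha, hxa, h1⟩ := E0 x hx u hu huD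
    obtain ⟨b, hb, hxb, h2⟩ := E0 x' hx' u' hu' huD'
    have := hclosed {x, x'} x hx (by simp) (by
      intro v hv _ w hw hvw
      rw [Finset.mem_insert, Finset.mem_singleton] at hv
      rcases hv with rfl | rfl
      · rw [h1 w hw hvw, ← h1 x' hx' hxx]; simp
      · rw [h2 w hw hvw, ← h2 x hx hxx.symm]; simp)
    have h3 := Finset.card_le_two (a := x) (b := x')
    omega
  -- degrees in `H`
  have hdeg1 : ∀ x : D, ∀ u, G.Adj (x : V) u → u ∉ D → H.degree x ≤ 1 := by
    intro x u hu huD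
    obtain ⟨a, ha, hxa, h1⟩ := E0 x x.2 u hu huD
    rw [← SimpleGraph.card_neighborFinset_eq_degree]
    have : H.neighborFinset x ⊆ {⟨a, ha⟩} := by
      intro w hw
      rw [SimpleGraph.mem_neighborFinset, hHadj] at hw
      rw [Finset.mem_singleton]
      exact Subtype.ext (h1 w w.2 hw)
    exact (Finset.card_le_card this).trans (by simp)
  -- interior pairs
  have hpair0 : ∀ x ∈ D, (∀ w, G.Adj x w → w ∈ D) →
      ∃ z ∈ D, G.Adj x z ∧ ∀ w, G.Adj z w → w ∈ D := by
    intro x hx hxi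
    by_contra! hc
    obtain ⟨a, b, hab, ha, hb, h⟩ := two_nbrs G x (hD2 x hx)
    have hone : ∀ a, G.Adj x a → ∀ w ∈ D, G.Adj a w → w = x := by
      intro a ha w hw haw
      obtain ⟨u, hu, huD⟩ := hc a (hxi a ha) ha
      obtain ⟨e, he, hae, h1⟩ := E0 a (hxi a ha) u hu huD
      rw [h1 w hw haw, h1 x hx ha.symm]
    have := hclosed {x, a, b} x hx (by simp) (by
      intro v hv _ w hw hvw
      simp only [Finset.mem_insert, Finset.mem_singleton] at hv ⊢
      rcases hv with rfl | rfl | rfl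
      · exact Or.inr (h w hvw)
      · exact Or.inl (hone _ ha w hw hvw)
      · exact Or.inl (hone _ hb w hw hvw))
    have h3 := Finset.card_le_three (a := x) (b := a) (c := b)
    omega
  have hpair : ∀ x : D, ∃ y z : D, H.connectedComponentMk y = H.connectedComponentMk x ∧
      H.connectedComponentMk z = H.connectedComponentMk x ∧ G.Adj (y : V) z ∧
      (∀ w, G.Adj (y : V) w → w ∈ D) ∧ (∀ w, G.Adj (z : V) w → w ∈ D) := by
    intro x
    have h1 : ∃ y : D, H.connectedComponentMk y = H.connectedComponentMk x ∧
        ∀ w, G.Adj (y : V) w → w ∈ D := by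
      by_cases hxi : ∀ w, G.Adj (x : V) w → w ∈ D
      · exact ⟨x, rfl, hxi⟩
      · push Not at hxi
        obtain ⟨u, hu, huD⟩ := hxi
        obtain ⟨a, ha, hxa, -⟩ := E0 x x.2 u hu huD
        refine ⟨⟨a, ha⟩, ?_, ?_⟩
        · rw [SimpleGraph.ConnectedComponent.eq]
          exact ((hHadj ⟨a, ha⟩ x).2 hxa.symm).reachable
        · intro w hw
          by_contra hwD
          exact E2 x x.2 a ha hxa u w hu huD hw hwD
    obtain ⟨y, hyx, hyi⟩ := h1
    obtain ⟨z, hz, hyz, hzi⟩ := hpair0 y y.2 hyi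
    refine ⟨y, ⟨z, hz⟩, hyx, ?_, hyz, hyi, hzi⟩
    rw [← hyx, SimpleGraph.ConnectedComponent.eq]
    exact ((hHadj ⟨z, hz⟩ y).2 hyz.symm).reachable
  have hvalid0 : (∀ v, v ∉ D) → ∀ c : V → ZMod 3, (∀ u v, G.Adj u v → c u ≠ c v) → Valid G D c :=
    fun h c hc u v huv => ⟨hc u v huv, fun _ hv => absurd hv (h v)⟩
  by_cases hφ : ∃ φ : V → ZMod 3, (∀ u v, G.Adj u v → φ u + φ v = 0) ∧ ∃ v, φ v ≠ 0
  · obtain ⟨φ, hφ, v₀, hv₀⟩ := hφ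
    have hn : ∀ v, φ v ≠ 0 := fun v hv => hv₀ (antisym_zero G hconn φ hφ v hv v₀)
    suffices h : ∃ c, Valid G D c ∧ ∑ v, φ v * c v = 0 by
      obtain ⟨c, hc, hT⟩ := h
      refine finish G D hdeg hD c hc ?_
      intro ψ hψ
      have : Fact (Nat.Prime 3) := ⟨by norm_num⟩
      have hz := antisym_zero G hconn (fun v => ψ v - ψ v₀ / φ v₀ * φ v) (by
        intro u v huv
        linear_combination hψ u v huv - ψ v₀ / φ v₀ * hφ u v huv) v₀ (by
        rw [div_mul_cancel₀ _ hv₀, sub_self])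
      have : ∑ v, ψ v * c v = ψ v₀ / φ v₀ * ∑ v, φ v * c v := by
        rw [Finset.mul_sum]
        refine Finset.sum_congr rfl fun v _ => ?_
        linear_combination c v * hz v
      rw [this, hT, mul_zero]
    by_cases hDe : ∀ v, v ∉ D
    · obtain ⟨c, hc, hT⟩ := bip_cubic G hconn (fun v => hD3 v (hDe v)) φ hφ hn
      exact ⟨c, hvalid0 hDe c hc, hT⟩
    push Not at hDe
    obtain ⟨x₀, hx₀⟩ := hDe
    obtain ⟨y, z, hyx, hzx, hyz, hyi, hzi⟩ := hpair ⟨x₀, hx₀⟩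
    have hbase : ∀ β : ZMod 3, β ≠ 0 → ∃ c, Valid G D c ∧
        ∀ v, v ∉ D → c v = if φ v = β then 1 else 0 := by
      intro β hβ
      refine extD G D hD2 E1 E2 (fun v => if φ v = β then 1 else 0) ?_
      intro u v _ _ huv
      refine bip_proper G φ hφ hn β hβ (fun v => if φ v = β then 1 else 0) ?_ u v huv
      intro v; split_ifs with h <;> simp [h]
    by_cases hb : ∃ b, b ∉ D ∧ ∀ w, G.Adj b w → w ∉ D
    · obtain ⟨b, hbD, hbn⟩ := hb
      obtain ⟨c, hc, hcD⟩ := hbase (φ b) (hn b)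
      have hcb : c b = 1 := by rw [hcD b hbD]; simp
      have hnb : ∀ w, G.Adj b w → c w = 0 := by
        intro w hw
        rw [hcD w (hbn w hw), if_neg]
        have := bip_alt _ _ (φ b) (hφ b w hw) (hn b) (hn b)
        tauto
      have h20 : (2 : ZMod 3) ≠ 0 := by decide
      have hc' : Valid G D (Function.update c b 2) := by
        intro u v huv
        by_cases hu : u = b
        · subst hu
          rw [Function.update_self, Function.update_of_ne huv.ne', hnb v huv]
          exact ⟨h20, fun _ hv => absurd hv (hbn v huv)⟩
        · by_cases hv : v = b
          · subst hv
            rw [Function.update_self, Function.update_of_ne huv.ne, hnb u huv.symm]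
            exact ⟨h20.symm, fun _ hv => absurd hv hbD⟩
          · rw [Function.update_of_ne hu, Function.update_of_ne hv]
            exact hc u v huv
      refine reach G D hD2 y z y.2 z.2 hyz hyi hzi φ hφ (hn y) c _ hc hc' ?_ ?_ ?_
      · rw [Function.update_of_ne]; rintro h; exact hbD (h ▸ y.2)
      · rw [Function.update_of_ne]; rintro h; exact hbD (h ▸ z.2)
      · rw [sum_one, hcb]
        intro h
        apply hn b
        linear_combination -h
    · push Not at hb
      have htwo : ∃ x' : D, H.connectedComponentMk x' ≠ H.connectedComponentMk ⟨x₀, hx₀⟩ := by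
        by_contra! hsame
        have hex : ∃ u, u ∉ D := by
          by_contra! hall
          have hDu : D = Set.univ := Set.eq_univ_of_forall hall
          have hac : G.IsAcyclic := by
            refine SimpleGraph.IsAcyclic.comap (G' := H)
              ⟨fun v => (⟨v, hall v⟩ : D), fun {a b} h => (hHadj _ _).2 h⟩ ?_ hacyc
            intro a b h
            simpa using h
          have hT : G.IsTree := ⟨hconn, hac⟩
          have h1 := hT.card_edgeFinset
          have h2 := G.sum_degrees_eq_twice_card_edges
          rw [Finset.sum_congr rfl (fun v _ => hD2 v (hall v))] at h2
          simp only [Finset.sum_const, Finset.card_univ, smul_eq_mul] at h2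
          omega
        obtain ⟨u, hu⟩ := hex
        have hcomp : ∀ a b : D, H.connectedComponentMk a = H.connectedComponentMk b := fun a b => by
          rw [hsame a, hsame b]
        have hnD : ∀ w, G.Adj u w → w ∈ D := by
          intro w huw
          by_contra hw
          obtain ⟨x, hux, hx⟩ := hb u hu
          obtain ⟨x', hwx, hx'⟩ := hb w hw
          have hne : x ≠ x' := by
            rintro rfl
            exact huw.ne (E1 x hx u w hux.symm hu hwx.symm hw)
          exact (hends ⟨x, hx⟩ ⟨x', hx'⟩ (hcomp _ _) (by simpa using hne)
            (hdeg1 _ u hux.symm hu) (hdeg1 _ w hwx.symm hw) u w hux.symm hu hwx.symm hw).2 huw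
        have : 1 < (G.neighborFinset u).card := by
          rw [SimpleGraph.card_neighborFinset_eq_degree, hD3 u hu]; omega
        obtain ⟨x, hx, x', hx', hne⟩ := Finset.one_lt_card.1 this
        rw [SimpleGraph.mem_neighborFinset] at hx hx'
        exact (hends ⟨x, hnD x hx⟩ ⟨x', hnD x' hx'⟩ (hcomp _ _) (by simpa using hne)
            (hdeg1 _ u hx.symm hu) (hdeg1 _ u hx'.symm hu) u u hx.symm hu hx'.symm hu).1 rfl
      obtain ⟨x', hx'⟩ := htwo
      obtain ⟨y', z', hyx', hzx', hyz', hyi', hzi'⟩ := hpair x'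
      obtain ⟨c, hc, -⟩ := hbase 1 (by decide)
      have hs0 : c z' - c y' ≠ 0 := fun h => (hc y' z' hyz').1 (by linear_combination -h)
      obtain ⟨c', hc', ho, hs⟩ := flex G D hD2 c hc y' z' y'.2 z'.2 hyz' hyi' hzi' _ hs0
      have hne : ∀ a b : D, H.connectedComponentMk a = H.connectedComponentMk ⟨x₀, hx₀⟩ →
          H.connectedComponentMk b = H.connectedComponentMk x' → (a : V) ≠ b := by
        intro a b ha hb h
        have : a = b := Subtype.ext h
        subst this
        exact hx' (hb.symm.trans ha)
      refine reach G D hD2 y z y.2 z.2 hyz hyi hzi φ hφ (hn y) c c' hc hc' ?_ ?_ ?_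
      · exact (ho y (hne _ _ hyx hyx') (hne _ _ hyx hzx')).symm
      · exact (ho z (hne _ _ hzx hyx') (hne _ _ hzx hzx')).symm
      · rw [sum_two φ c c' y' z' hyz'.ne ho]
        intro h
        have hmul : ∀ a b : ZMod 3, a ≠ 0 → b ≠ 0 → a * (b + b) ≠ 0 := by decide
        apply hmul _ _ (hn y') hs0
        linear_combination -h - φ y' * hs - (c' z' - c z') * hφ _ _ hyz'
  · have hfin : ∀ c, Valid G D c → LIRtwoLE2 G := by
      intro c hc
      refine finish G D hdeg hD c hc ?_
      intro ψ hψ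
      have : ∀ v, ψ v = 0 := by
        intro v
        by_contra h
        exact hφ ⟨ψ, hψ, v, h⟩
      simp [this]
    by_cases hDe : ∀ v, v ∉ D
    · rcases brooks3 G hconn (fun v => hD3 v (hDe v)) with ⟨f, hf⟩ | ⟨a, b, c, d, h1, h2, h3, h4, h5, h6, h7⟩
      · exact hfin f (hvalid0 hDe f hf)
      · exact k4_case G a b c d h1 h2 h3 h4 h5 h6 h7 (fun v => hD3 v (hDe v))
    push Not at hDe
    obtain ⟨x₀, hx₀⟩ := hDe
    obtain ⟨f, hf⟩ := col_proper G hconn hle3 (Finset.univ.filter (fun v => v ∉ D)) x₀ (by simpa using hx₀)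
    obtain ⟨c, hc, -⟩ := extD G D hD2 E1 E2 f (fun u v hu hv huv =>
      hf u (by simpa using hu) v (by simpa using hv) huv)
    exact hfin c hc
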